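/- Let A_1, ..., A_k be events in a family I closed under intersections and unions in which any two events are positively correlated. With X = Σ_i 1_{A_i}, μ = E[X], Δ = Σ_i Σ_{j~i} Pr(A_i ∩ A_j), and φ(x) = (1+x)log(1+x) − x (with φ(−1) = 1), for all 0 ≤ t ≤ μ: Pr(X ≤ μ − t) ≤ exp(−φ(−t/μ)μ²/(μ + Δ)). -/

import Mathlib

open MeasureTheory Finset Real
open scoped Classical

open ProbabilityTheory InformationTheory

/-!
Put `X = ∑ i, 1_{A i}` and `Ψ s = E[exp (-s X)]`. The identity
`exp (-s 1_A) = (1 - e⁻ˢ) 1_{Aᶜ} + e⁻ˢ` turns `exp (-s X)` into a mixture, over random index sets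
`Q`, of indicators of the events "no `A j` with `j ∈ Q` occurs". If `A i` is independent of every
`A j` with `j ∈ Q`, then positive correlation of `A i` with both unions and intersections forces
`A i` to be independent of `⋃ j ∈ Q, A j`. Hence `-Ψ' s = E[X exp (-s X)]` is at least
`Ψ s * ∑ i, E[1_{A i} exp (-s Xᵢ)]`, where `Xᵢ` counts the events in the neighbourhood of `i`
(including `i`), and by convexity of `exp` this is at least `Ψ s * μ exp (-s c)` with
`c = (μ + Δ) / μ`. Integrating gives `Ψ s ≤ exp (-κ (1 - exp (-s c)))` with `κ = μ / c`, the Laplace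
transform of `c` times a Poisson variable of mean `κ`, and Chernoff's bound at the optimal `s`
yields the rate function `φ`.
-/

section Analysis

lemma le_mul_exp_sub_of_hasDerivAt_le {f f' g g' : ℝ → ℝ} {a b : ℝ}
    (hf : ∀ x, a ≤ x → HasDerivAt f (f' x) x) (hg : ∀ x, a ≤ x → HasDerivAt g (g' x) x)
    (h : ∀ x, a < x → f' x ≤ -(g' x * f x)) (hab : a ≤ b) :
    f b ≤ f a * exp (g a - g b) := by
  have hderiv x (hx : a ≤ x) : HasDerivAt (fun x ↦ f x * exp (g x))
      (f' x * exp (g x) + f x * (exp (g x) * g' x)) x := (hf x hx).mul (hg x hx).exp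
  have hanti : AntitoneOn (fun x ↦ f x * exp (g x)) (Set.Ici a) := by
    refine antitoneOn_of_hasDerivWithinAt_nonpos (convex_Ici a)
      (fun x hx ↦ (hderiv x hx).continuousAt.continuousWithinAt)
      (fun x hx ↦ (hderiv x (interior_subset hx)).hasDerivWithinAt) fun x hx ↦ ?_
    rw [interior_Ici] at hx
    linarith [mul_le_mul_of_nonneg_right (h x hx) (exp_pos (g x)).le]
  have hle : f b * exp (g b) ≤ f a * exp (g a) := hanti Set.self_mem_Ici hab hab
  rwa [exp_sub, ← mul_div_assoc, le_div_iff₀ (exp_pos _)]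

lemma le_exp_neg_mul_klFun {q κ x : ℝ} (hx0 : 0 ≤ x) (hx1 : x ≤ 1)
    (h : ∀ l, 0 ≤ l → q ≤ exp (κ * (l * x - (1 - exp (-l))))) :
    q ≤ exp (-(κ * klFun x)) := by
  rcases hx0.eq_or_lt with rfl | hx0
  · have hlim : Filter.Tendsto (fun l ↦ exp (κ * (l * 0 - (1 - exp (-l))))) Filter.atTop
        (nhds (exp (κ * (0 - (1 - 0))))) := by
      simp only [mul_zero]
      exact (((tendsto_exp_neg_atTop_nhds_zero.const_sub 1).const_sub 0).const_mul κ).rexp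
    refine (ge_of_tendsto hlim ?_).trans_eq (by simp [klFun_zero])
    filter_upwards [Filter.eventually_ge_atTop 0] using h
  · refine (h (-log x) (neg_nonneg.2 (log_nonpos hx0.le hx1))).trans_eq ?_
    rw [neg_neg, exp_log hx0, klFun_apply]
    ring_nf

lemma exp_neg_mul_le_integral_exp_neg {Ω : Type*} [MeasurableSpace Ω] {P : Measure Ω}
    [IsFiniteMeasure P] {Y : Ω → ℝ} (hY : Integrable Y P)
    (hexp : Integrable (fun ω ↦ exp (-Y ω)) P) (a : ℝ) :
    exp (-a) * ((1 + a) * P.real Set.univ - ∫ ω, Y ω ∂P) ≤ ∫ ω, exp (-Y ω) ∂P := by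
  have htangent ω : exp (-a) * (1 + a - Y ω) ≤ exp (-Y ω) := calc
    exp (-a) * (1 + a - Y ω) ≤ exp (-a) * exp (a - Y ω) := by
      gcongr
      linarith [add_one_le_exp (a - Y ω)]
    _ = exp (-Y ω) := by rw [← exp_add]; ring_nf
  calc
    exp (-a) * ((1 + a) * P.real Set.univ - ∫ ω, Y ω ∂P)
      = ∫ ω, exp (-a) * (1 + a - Y ω) ∂P := by
        rw [integral_const_mul, integral_sub (integrable_const _) hY, integral_const, smul_eq_mul,
          mul_comm (P.real _)]
    _ ≤ ∫ ω, exp (-Y ω) ∂P :=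
        integral_mono (((integrable_const _).sub hY).const_mul _) hexp htangent

lemma mgf_neg_le_exp_of_forall_mul_le {Ω : Type*} [MeasurableSpace Ω] {P : Measure Ω}
    [IsProbabilityMeasure P] {X : Ω → ℝ} (hX : ∀ t, Integrable (fun ω ↦ exp (t * X ω)) P)
    {κ c : ℝ} (h : ∀ s, 0 ≤ s →
      κ * c * exp (-(s * c)) * mgf X P (-s) ≤ ∫ ω, X ω * exp (-s * X ω) ∂P)
    {s : ℝ} (hs : 0 ≤ s) :
    mgf X P (-s) ≤ exp (-(κ * (1 - exp (-(s * c))))) := by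
  have hmgf s : HasDerivAt (fun s ↦ mgf X P (-s)) (-∫ ω, X ω * exp (-s * X ω) ∂P) s := by
    have huniv : integrableExpSet X P = Set.univ := Set.eq_univ_of_forall hX
    simpa only [mul_neg_one] using! (hasDerivAt_mgf (X := X) (μ := P) (t := -s)
      (by simp [huniv])).comp s (hasDerivAt_neg s)
  have hrate s : HasDerivAt (fun s ↦ κ * (1 - exp (-(s * c)))) (κ * c * exp (-(s * c))) s := by
    convert! ((hasDerivAt_mul_const c).fun_neg.exp.const_sub 1).const_mul κ using 1
    ring
  simpa using le_mul_exp_sub_of_hasDerivAt_le (fun s _ ↦ hmgf s) (fun s _ ↦ hrate s)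
    (fun s hs ↦ neg_le_neg (h s hs.le)) hs

end Analysis

section EventCount

variable {Ω ι : Type*}

/-- The number `∑ j ∈ S, 1_{A j}` of events of the family `A` with index in `S` that occur, as a
real random variable. -/
noncomputable def eventCount (A : ι → Set Ω) (S : Finset ι) (ω : Ω) : ℝ :=
  ∑ j ∈ S, (A j).indicator 1 ω

lemma eventCount_nonneg (A : ι → Set Ω) (S : Finset ι) (ω : Ω) : 0 ≤ eventCount A S ω :=
  sum_nonneg fun _ _ ↦ Set.indicator_nonneg (fun _ _ ↦ zero_le_one) ω

lemma eventCount_le_card (A : ι → Set Ω) (S : Finset ι) (ω : Ω) : eventCount A S ω ≤ #S := by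
  refine (sum_le_card_nsmul S _ 1 fun _ _ ↦ ?_).trans_eq (by simp)
  exact Set.indicator_le_self' (fun _ _ ↦ zero_le_one) ω

lemma eventCount_mono (A : ι → Set Ω) {S T : Finset ι} (h : S ⊆ T) (ω : Ω) :
    eventCount A S ω ≤ eventCount A T ω :=
  sum_le_sum_of_subset_of_nonneg h fun _ _ _ ↦ Set.indicator_nonneg (fun _ _ ↦ zero_le_one) ω

lemma eventCount_add_eventCount_compl [Fintype ι] (A : ι → Set Ω) (S : Finset ι) (ω : Ω) :
    eventCount A S ω + eventCount A Sᶜ ω = eventCount A univ ω :=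
  sum_add_sum_compl S _

lemma prod_indicator_compl_one (A : ι → Set Ω) (S : Finset ι) (ω : Ω) :
    ∏ j ∈ S, (A j)ᶜ.indicator (1 : Ω → ℝ) ω = (⋃ j ∈ S, A j)ᶜ.indicator 1 ω := by
  by_cases h : ∃ j ∈ S, ω ∈ A j
  · obtain ⟨j, hj, hω⟩ := h
    rw [prod_eq_zero hj (by simp [hω]), Set.indicator_of_notMem (by simpa using ⟨j, hj, hω⟩)]
  · push Not at h
    rw [prod_eq_one fun j hj ↦ by simp [h j hj], Set.indicator_of_mem (by simpa using h)]
    rfl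

/-- The weights are those of the random subset of `S` that keeps each index independently with
probability `1 - exp (-s)`. -/
lemma exp_neg_mul_eventCount (A : ι → Set Ω) (S : Finset ι) (s : ℝ) (ω : Ω) :
    exp (-s * eventCount A S ω) = ∑ Q ∈ S.powerset,
      (1 - exp (-s)) ^ #Q * exp (-s) ^ #(S \ Q) * (⋃ j ∈ Q, A j)ᶜ.indicator 1 ω := by
  have hfactor j : exp (-s * (A j).indicator 1 ω) =
      (1 - exp (-s)) * (A j)ᶜ.indicator 1 ω + exp (-s) := by
    by_cases h : ω ∈ A j <;> simp [h]
  rw [eventCount, mul_sum, exp_sum]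
  simp_rw [hfactor, prod_add, prod_mul_distrib, prod_const, prod_indicator_compl_one,
    mul_right_comm]

variable [MeasurableSpace Ω] {P : Measure Ω} {A : ι → Set Ω}

lemma measurable_eventCount (hA : ∀ i, MeasurableSet (A i)) (S : Finset ι) :
    Measurable (eventCount A S) :=
  measurable_fun_sum S fun i _ ↦ measurable_one.indicator (hA i)

lemma integrable_exp_mul_eventCount [IsFiniteMeasure P] (hA : ∀ i, MeasurableSet (A i))
    (S : Finset ι) (t : ℝ) : Integrable (fun ω ↦ exp (t * eventCount A S ω)) P :=
  integrable_exp_mul_of_mem_Icc (measurable_eventCount hA S).aemeasurable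
    (ae_of_all _ fun ω ↦ ⟨eventCount_nonneg A S ω, eventCount_le_card A S ω⟩)

lemma integrable_eventCount [IsFiniteMeasure P] (hA : ∀ i, MeasurableSet (A i)) (S : Finset ι) :
    Integrable (eventCount A S) P :=
  integrable_finsetSum S fun i _ ↦ (integrable_const 1).indicator (hA i)

lemma integral_eventCount_mul (hA : ∀ i, MeasurableSet (A i)) (S : Finset ι) {f : Ω → ℝ}
    (hf : Integrable f P) :
    ∫ ω, eventCount A S ω * f ω ∂P = ∑ i ∈ S, ∫ ω in A i, f ω ∂P := by
  have hindicator i ω : (A i).indicator 1 ω * f ω = (A i).indicator f ω := by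
    by_cases h : ω ∈ A i <;> simp [h]
  simp_rw [eventCount, sum_mul, hindicator]
  rw [integral_finsetSum S fun i _ ↦ hf.indicator (hA i)]
  exact sum_congr rfl fun i _ ↦ integral_indicator (hA i)

lemma setIntegral_eventCount [IsFiniteMeasure P] (hA : ∀ i, MeasurableSet (A i)) (S : Finset ι)
    (B : Set Ω) : ∫ ω in B, eventCount A S ω ∂P = ∑ i ∈ S, P.real (B ∩ A i) := by
  simpa [measureReal_restrict_apply (hA _), Set.inter_comm] using
    integral_eventCount_mul (P := P.restrict B) hA S (integrable_const 1)

lemma integral_mul_exp_neg_mul_eventCount (hA : ∀ i, MeasurableSet (A i)) (S : Finset ι) (s : ℝ)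
    {f : Ω → ℝ} (hf : Integrable f P) :
    ∫ ω, f ω * exp (-s * eventCount A S ω) ∂P = ∑ Q ∈ S.powerset,
      (1 - exp (-s)) ^ #Q * exp (-s) ^ #(S \ Q) * ∫ ω in (⋃ j ∈ Q, A j)ᶜ, f ω ∂P := by
  have hU (Q : Finset ι) : MeasurableSet (⋃ j ∈ Q, A j)ᶜ :=
    (Q.measurableSet_biUnion fun i _ ↦ hA i).compl
  have hindicator (w : ℝ) (U : Set Ω) ω : f ω * (w * U.indicator 1 ω) = w * U.indicator f ω := by
    by_cases h : ω ∈ U <;> simp [h, mul_comm]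
  simp_rw [exp_neg_mul_eventCount, mul_sum, hindicator]
  rw [integral_finsetSum _ fun Q _ ↦ (hf.indicator (hU Q)).const_mul _]
  simp_rw [integral_const_mul, integral_indicator (hU _)]

lemma integral_mul_exp_neg_mul_eventCount_le {P' : Measure Ω} (hA : ∀ i, MeasurableSet (A i))
    (S : Finset ι) {s : ℝ} (hs : 0 ≤ s) {f g : Ω → ℝ} (hf : Integrable f P) (hg : Integrable g P')
    (h : ∀ Q ⊆ S, ∫ ω in (⋃ j ∈ Q, A j)ᶜ, f ω ∂P ≤ ∫ ω in (⋃ j ∈ Q, A j)ᶜ, g ω ∂P') :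
    ∫ ω, f ω * exp (-s * eventCount A S ω) ∂P ≤ ∫ ω, g ω * exp (-s * eventCount A S ω) ∂P' := by
  have hp : 0 ≤ 1 - exp (-s) := by simpa using hs
  rw [integral_mul_exp_neg_mul_eventCount hA S s hf, integral_mul_exp_neg_mul_eventCount hA S s hg]
  gcongr with Q hQ
  exact h Q (mem_powerset.1 hQ)

end EventCount

section Correlation

variable {Ω : Type*} [MeasurableSpace Ω] {P : Measure Ω} {B U V : Set Ω}

lemma measureReal_inter_union_eq_mul [IsFiniteMeasure P] (hB : MeasurableSet B)
    (hV : MeasurableSet V)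
    (hBU : P.real (B ∩ U) = P.real B * P.real U) (hBV : P.real (B ∩ V) = P.real B * P.real V)
    (hunion : P.real B * P.real (U ∪ V) ≤ P.real (B ∩ (U ∪ V)))
    (hinter : P.real B * P.real (U ∩ V) ≤ P.real (B ∩ (U ∩ V))) :
    P.real (B ∩ (U ∪ V)) = P.real B * P.real (U ∪ V) := by
  have hsum : P.real (U ∪ V) + P.real (U ∩ V) = P.real U + P.real V :=
    measureReal_union_add_inter hV
  have hsumB : P.real (B ∩ (U ∪ V)) + P.real (B ∩ (U ∩ V)) = P.real (B ∩ U) + P.real (B ∩ V) := by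
    rw [Set.inter_union_distrib_left, Set.inter_inter_distrib_left]
    exact measureReal_union_add_inter (hB.inter hV)
  have hmul : P.real B * P.real (U ∪ V) + P.real B * P.real (U ∩ V) =
      P.real B * P.real U + P.real B * P.real V := by rw [← mul_add, hsum, mul_add]
  linarith

lemma measureReal_inter_compl_mul_le [IsProbabilityMeasure P] (hU : MeasurableSet U)
    (hV : MeasurableSet V) (hBV : P.real (B ∩ V) = P.real B * P.real V)
    (hBUV : P.real (B ∩ U) * P.real V ≤ P.real (B ∩ U ∩ V)) :
    P.real (B ∩ Uᶜ) * P.real Vᶜ ≤ P.real (B ∩ Uᶜ ∩ Vᶜ) := by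
  have hB : P.real (B ∩ U) + P.real (B ∩ Uᶜ) = P.real B := measureReal_inter_add_sdiff hU
  have hBV' : P.real (B ∩ U ∩ V) + P.real (B ∩ Uᶜ ∩ V) = P.real (B ∩ V) := by
    rw [Set.inter_right_comm B U, Set.inter_right_comm B Uᶜ]
    exact measureReal_inter_add_sdiff hU
  have hBU : P.real (B ∩ Uᶜ ∩ V) + P.real (B ∩ Uᶜ ∩ Vᶜ) = P.real (B ∩ Uᶜ) :=
    measureReal_inter_add_sdiff hV
  rw [probReal_compl_eq_one_sub hV, mul_one_sub]
  have hmul : P.real (B ∩ U) * P.real V + P.real (B ∩ Uᶜ) * P.real V = P.real B * P.real V := by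
    rw [← add_mul, hB]
  linarith

/-- A lattice of measurable events, any two of which are positively correlated; think of the up-sets
of a product space, for which this is Harris' inequality. The empty event is included so that finite
unions may be empty. -/
structure IsPosCorrLattice (P : Measure Ω) (J : Set (Set Ω)) : Prop where
  isSublattice : IsSublattice J
  empty_mem : ∅ ∈ J
  measurableSet : ∀ ⦃B⦄, B ∈ J → MeasurableSet B
  mul_le_inter : ∀ ⦃B⦄, B ∈ J → ∀ ⦃C⦄, C ∈ J → P.real B * P.real C ≤ P.real (B ∩ C)

namespace IsPosCorrLattice

lemma insert_empty_inter_measurableSet [IsFiniteMeasure P] {I : Set (Set Ω)} (hI : IsSublattice I)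
    (hcorr : ∀ B ∈ I, ∀ C ∈ I, P B * P C ≤ P (B ∩ C)) :
    IsPosCorrLattice P (insert ∅ (I ∩ {B | MeasurableSet B})) where
  isSublattice := by
    refine ⟨SupClosed.insert_lowerBounds ?_ fun B _ ↦ B.empty_subset,
      InfClosed.insert_lowerBounds ?_ fun B _ ↦ B.empty_subset⟩
    · exact hI.supClosed.inter fun _ hB _ hC ↦ MeasurableSet.union hB hC
    · exact hI.infClosed.inter fun _ hB _ hC ↦ MeasurableSet.inter hB hC
  empty_mem := Set.mem_insert _ _
  measurableSet := by
    rintro B (rfl | hB)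
    exacts [.empty, hB.2]
  mul_le_inter := by
    rintro B (rfl | hB) C (rfl | hC)
    · simp
    · simp
    · simp
    · rw [measureReal_def, measureReal_def, ← ENNReal.toReal_mul]
      exact ENNReal.toReal_mono (measure_ne_top _ _) (hcorr B hB.1 C hC.1)

variable {J : Set (Set Ω)} {ι : Type*} {A : ι → Set Ω}

lemma biUnion_mem (hJ : IsPosCorrLattice P J) (hA : ∀ i, A i ∈ J) (S : Finset ι) :
    ⋃ j ∈ S, A j ∈ J := by
  rw [← sup_set_eq_biUnion]
  exact sup_mem J hJ.empty_mem (fun _ hB _ hC ↦ hJ.isSublattice.supClosed hB hC) S A fun i _ ↦ hA i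

lemma measureReal_inter_biUnion_eq_mul [IsFiniteMeasure P] (hJ : IsPosCorrLattice P J)
    (hA : ∀ i, A i ∈ J) (hB : B ∈ J) (S : Finset ι)
    (hS : ∀ j ∈ S, P.real (B ∩ A j) = P.real B * P.real (A j)) :
    P.real (B ∩ ⋃ j ∈ S, A j) = P.real B * P.real (⋃ j ∈ S, A j) := by
  induction S using Finset.induction_on with
  | empty => simp
  | insert a S _ ih =>
    rw [forall_mem_insert] at hS
    have hU := hJ.biUnion_mem hA S
    rw [set_biUnion_insert]
    exact measureReal_inter_union_eq_mul (hJ.measurableSet hB) (hJ.measurableSet hU) hS.1 (ih hS.2)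
      (hJ.mul_le_inter hB (hJ.isSublattice.supClosed (hA a) hU))
      (hJ.mul_le_inter hB (hJ.isSublattice.infClosed (hA a) hU))

variable [IsProbabilityMeasure P]

lemma setIntegral_exp_mul_measureReal_compl_le (hJ : IsPosCorrLattice P J) (hA : ∀ i, A i ∈ J)
    (hB : B ∈ J) (hV : V ∈ J) (hBV : P.real (B ∩ V) = P.real B * P.real V) (T : Finset ι) {s : ℝ}
    (hs : 0 ≤ s) :
    (∫ ω in B, exp (-s * eventCount A T ω) ∂P) * P.real Vᶜ ≤
      ∫ ω in B ∩ Vᶜ, exp (-s * eventCount A T ω) ∂P := by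
  have hmeas i := hJ.measurableSet (hA i)
  have hle : ∫ ω in B, P.real Vᶜ * exp (-s * eventCount A T ω) ∂P ≤
      ∫ ω in B ∩ Vᶜ, 1 * exp (-s * eventCount A T ω) ∂P := by
    refine integral_mul_exp_neg_mul_eventCount_le hmeas T hs (integrable_const _)
      (integrable_const _) fun Q _ ↦ ?_
    have hU := hJ.biUnion_mem hA Q
    have hcorr := measureReal_inter_compl_mul_le (hJ.measurableSet hU) (hJ.measurableSet hV) hBV
      (hJ.mul_le_inter (hJ.isSublattice.infClosed hB hU) hV)
    simp only [Measure.restrict_restrict (hJ.measurableSet hU).compl, setIntegral_const,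
      smul_eq_mul, mul_one]
    rwa [Set.inter_comm _ B, Set.inter_comm _ (B ∩ Vᶜ), Set.inter_right_comm]
  simpa only [mul_comm (P.real Vᶜ), integral_mul_const, one_mul] using hle

/-- If `B` is independent of the events with index in `R`, then conditionally on `B` the two
exponential factors are positively correlated, even though `R` may interact with `T`. -/
lemma setIntegral_exp_mul_integral_exp_le (hJ : IsPosCorrLattice P J) (hA : ∀ i, A i ∈ J)
    (hB : B ∈ J) (T R : Finset ι) (hR : ∀ j ∈ R, P.real (B ∩ A j) = P.real B * P.real (A j))
    {s : ℝ} (hs : 0 ≤ s) :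
    (∫ ω in B, exp (-s * eventCount A T ω) ∂P) * ∫ ω, exp (-s * eventCount A R ω) ∂P ≤
      ∫ ω in B, exp (-s * eventCount A T ω) * exp (-s * eventCount A R ω) ∂P := by
  have hmeas i := hJ.measurableSet (hA i)
  rw [← integral_const_mul]
  refine integral_mul_exp_neg_mul_eventCount_le hmeas R hs (integrable_const _)
    (integrable_exp_mul_eventCount hmeas T (-s)) fun Q hQ ↦ ?_
  have hV := hJ.biUnion_mem hA Q
  have hBV := hJ.measureReal_inter_biUnion_eq_mul hA hB Q fun j hj ↦ hR j (hQ hj)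
  have hle := hJ.setIntegral_exp_mul_measureReal_compl_le hA hB hV hBV T hs
  rwa [setIntegral_const, smul_eq_mul, mul_comm (P.real _),
    Measure.restrict_restrict (hJ.measurableSet hV).compl, Set.inter_comm]

variable [Fintype ι]

lemma setIntegral_exp_mul_mgf_le (hJ : IsPosCorrLattice P J) (hA : ∀ i, A i ∈ J) (hB : B ∈ J)
    (T : Finset ι) (hT : ∀ j ∉ T, P.real (B ∩ A j) = P.real B * P.real (A j)) {s : ℝ}
    (hs : 0 ≤ s) :
    (∫ ω in B, exp (-s * eventCount A T ω) ∂P) * mgf (eventCount A univ) P (-s) ≤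
      ∫ ω in B, exp (-s * eventCount A univ ω) ∂P := by
  have hint S := integrable_exp_mul_eventCount (P := P) (fun i ↦ hJ.measurableSet (hA i)) S (-s)
  have hmgf : mgf (eventCount A univ) P (-s) ≤ ∫ ω, exp (-s * eventCount A Tᶜ ω) ∂P :=
    integral_mono (hint univ) (hint Tᶜ) fun ω ↦ exp_le_exp.2 <|
      mul_le_mul_of_nonpos_left (eventCount_mono A (subset_univ _) ω) (neg_nonpos.2 hs)
  calc
    _ ≤ (∫ ω in B, exp (-s * eventCount A T ω) ∂P) * ∫ ω, exp (-s * eventCount A Tᶜ ω) ∂P :=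
      mul_le_mul_of_nonneg_left hmgf (integral_nonneg fun _ ↦ (exp_pos _).le)
    _ ≤ ∫ ω in B, exp (-s * eventCount A T ω) * exp (-s * eventCount A Tᶜ ω) ∂P :=
      hJ.setIntegral_exp_mul_integral_exp_le hA hB T Tᶜ (fun j hj ↦ hT j (mem_compl.1 hj)) hs
    _ = ∫ ω in B, exp (-s * eventCount A univ ω) ∂P := by
      simp_rw [← exp_add, ← mul_add, eventCount_add_eventCount_compl]

end IsPosCorrLattice

end Correlation

section Janson

variable {Ω ι : Type*} [Fintype ι] [MeasurableSpace Ω] {P : Measure Ω} {A : ι → Set Ω}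
  {T : ι → Finset ι} {c κ s : ℝ}

lemma sum_measureReal_mul_exp_le [IsFiniteMeasure P] (hA : ∀ i, MeasurableSet (A i))
    (hc : c * ∑ i, P.real (A i) = ∑ i, ∑ j ∈ T i, P.real (A i ∩ A j)) (s : ℝ) :
    (∑ i, P.real (A i)) * exp (-(s * c)) ≤
      ∑ i, ∫ ω in A i, exp (-s * eventCount A (T i) ω) ∂P := by
  have hterm i : exp (-(s * c)) * ((1 + s * c) * P.real (A i) -
      s * ∑ j ∈ T i, P.real (A i ∩ A j)) ≤ ∫ ω in A i, exp (-s * eventCount A (T i) ω) ∂P := by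
    have hint := integrable_exp_mul_eventCount (P := P.restrict (A i)) hA (T i) (-s)
    simp only [neg_mul] at hint ⊢
    simpa [integral_const_mul, setIntegral_eventCount hA] using
      exp_neg_mul_le_integral_exp_neg ((integrable_eventCount hA (T i)).const_mul s) hint (s * c)
  refine le_trans (le_of_eq ?_) (sum_le_sum fun i _ ↦ hterm i)
  rw [← mul_sum, sum_sub_distrib, ← mul_sum, ← mul_sum, ← hc]
  ring

variable [IsProbabilityMeasure P] {J : Set (Set Ω)}

lemma sum_measureReal_mul_exp_mul_mgf_le (hJ : IsPosCorrLattice P J) (hA : ∀ i, A i ∈ J)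
    (hT : ∀ i, ∀ j ∉ T i, P.real (A i ∩ A j) = P.real (A i) * P.real (A j))
    (hc : c * ∑ i, P.real (A i) = ∑ i, ∑ j ∈ T i, P.real (A i ∩ A j)) (hs : 0 ≤ s) :
    (∑ i, P.real (A i)) * exp (-(s * c)) * mgf (eventCount A univ) P (-s) ≤
      ∫ ω, eventCount A univ ω * exp (-s * eventCount A univ ω) ∂P := by
  have hmeas i := hJ.measurableSet (hA i)
  rw [integral_eventCount_mul hmeas univ (integrable_exp_mul_eventCount hmeas univ (-s))]
  calc
    _ ≤ (∑ i, ∫ ω in A i, exp (-s * eventCount A (T i) ω) ∂P) *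
        mgf (eventCount A univ) P (-s) :=
      mul_le_mul_of_nonneg_right (sum_measureReal_mul_exp_le hmeas hc s) mgf_nonneg
    _ ≤ ∑ i, ∫ ω in A i, exp (-s * eventCount A univ ω) ∂P := by
      rw [sum_mul]
      exact sum_le_sum fun i _ ↦ hJ.setIntegral_exp_mul_mgf_le hA (hA i) (T i) (hT i) hs

lemma measureReal_eventCount_le_le_exp (hJ : IsPosCorrLattice P J) (hA : ∀ i, A i ∈ J)
    (hT : ∀ i, ∀ j ∉ T i, P.real (A i ∩ A j) = P.real (A i) * P.real (A j))
    (hc : c * ∑ i, P.real (A i) = ∑ i, ∑ j ∈ T i, P.real (A i ∩ A j))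
    (hκ : κ * c = ∑ i, P.real (A i)) (hs : 0 ≤ s) (a : ℝ) :
    P.real {ω | eventCount A univ ω ≤ a} ≤ exp (s * a - κ * (1 - exp (-(s * c)))) := by
  have hint := integrable_exp_mul_eventCount (P := P) (fun i ↦ hJ.measurableSet (hA i)) univ
  have hmgf : mgf (eventCount A univ) P (-s) ≤ exp (-(κ * (1 - exp (-(s * c))))) :=
    mgf_neg_le_exp_of_forall_mul_le hint
      (fun s hs ↦ hκ ▸ sum_measureReal_mul_exp_mul_mgf_le hJ hA hT hc hs) hs
  calc
    _ ≤ exp (- -s * a) * mgf (eventCount A univ) P (-s) :=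
      measure_le_le_exp_mul_mgf a (neg_nonpos.2 hs) (hint (-s))
    _ ≤ exp (- -s * a) * exp (-(κ * (1 - exp (-(s * c))))) := by gcongr
    _ = _ := by rw [← exp_add, neg_neg, ← sub_eq_add_neg]

lemma measureReal_eventCount_le_mul_le_exp_neg_klFun (hJ : IsPosCorrLattice P J)
    (hA : ∀ i, A i ∈ J)
    (hT : ∀ i, ∀ j ∉ T i, P.real (A i ∩ A j) = P.real (A i) * P.real (A j))
    (hc0 : 0 < c) (hc : c * ∑ i, P.real (A i) = ∑ i, ∑ j ∈ T i, P.real (A i ∩ A j))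
    {x : ℝ} (hx0 : 0 ≤ x) (hx1 : x ≤ 1) :
    P.real {ω | eventCount A univ ω ≤ x * ∑ i, P.real (A i)} ≤
      exp (-((∑ i, P.real (A i)) / c * klFun x)) := by
  refine le_exp_neg_mul_klFun hx0 hx1 fun l hl ↦ ?_
  have hκ : (∑ i, P.real (A i)) / c * c = ∑ i, P.real (A i) := div_mul_cancel₀ _ hc0.ne'
  refine (measureReal_eventCount_le_le_exp hJ hA hT hc hκ (div_nonneg hl hc0.le) _).trans_eq ?_
  rw [div_mul_cancel₀ _ hc0.ne']
  ring_nf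

end Janson

/-- The sharp lower-tail Janson inequality
`Pr(X ≤ μ − t) ≤ exp(−φ(−t/μ) μ²/(μ+Δ))` with `φ(x) = (1+x)log(1+x) − x`
(so that `φ(−1) = 1`, using `log 0 = 0`), for events in a family closed under
intersections and unions in which any two events are positively correlated. -/
theorem janson_lower_tail_phi_general_upsets
    {Ω : Type*} [MeasurableSpace Ω] (P : Measure Ω) [IsProbabilityMeasure P]
    (I : Set (Set Ω))
    (hcorr : ∀ A ∈ I, ∀ B ∈ I, P (A ∩ B) ≥ P A * P B)
    (hinter : ∀ A ∈ I, ∀ B ∈ I, A ∩ B ∈ I)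
    (hunion : ∀ A ∈ I, ∀ B ∈ I, A ∪ B ∈ I)
    (k : ℕ) (A : Fin k → Set Ω) (hA : ∀ i, A i ∈ I)
    (hAmeas : ∀ i, MeasurableSet (A i))
    (sim : Fin k → Fin k → Prop)
    (hsim : ∀ i j, sim i j ↔ i ≠ j ∧ P (A i ∩ A j) ≠ P (A i) * P (A j))
    (X : Ω → ℝ) (hX : ∀ ω, X ω = ∑ i : Fin k, if ω ∈ A i then (1 : ℝ) else 0)
    (μ Δ : ℝ)
    (hμ : μ = ∑ i : Fin k, (P (A i)).toReal)
    (hΔ : Δ = ∑ i : Fin k, ∑ j ∈ Finset.univ.filter (fun j => sim i j),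
        (P (A i ∩ A j)).toReal)
    (φ : ℝ → ℝ) (hφ : ∀ x, φ x = (1 + x) * Real.log (1 + x) - x) :
    ∀ t : ℝ, 0 ≤ t → t ≤ μ →
      (P {ω | X ω ≤ μ - t}).toReal ≤ Real.exp (-(φ (-t / μ) * μ ^ 2) / (μ + Δ)) := by
  intro t ht htμ
  have hJ := IsPosCorrLattice.insert_empty_inter_measurableSet (P := P)
    ⟨fun B hB C hC ↦ hunion B hB C hC, fun B hB C hC ↦ hinter B hB C hC⟩ hcorr
  have hAJ i : A i ∈ insert ∅ (I ∩ {B | MeasurableSet B}) := .inr ⟨hA i, hAmeas i⟩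
  obtain rfl : X = eventCount A univ := funext fun ω ↦ by simp [hX, eventCount, Set.indicator_apply]
  have hindep i : ∀ j ∉ insert i ({j | sim i j} : Finset (Fin k)),
      P.real (A i ∩ A j) = P.real (A i) * P.real (A j) := by
    intro j hj
    simp only [mem_insert, mem_filter_univ, hsim, not_or, not_and, not_not] at hj
    simp [measureReal_def, hj.2 (Ne.symm hj.1)]
  have hsum : μ + Δ = ∑ i, ∑ j ∈ insert i ({j | sim i j} : Finset (Fin k)), P.real (A i ∩ A j) := by
    simp [hμ, hΔ, hsim, sum_add_distrib, measureReal_def]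
  have hΔ0 : 0 ≤ Δ := hΔ ▸ by positivity
  rw [← measureReal_def]
  rcases (ht.trans htμ).eq_or_lt with hμ0 | hμ0
  · simp [← hμ0]
  replace hμ : ∑ i, P.real (A i) = μ := hμ.symm
  have htail := measureReal_eventCount_le_mul_le_exp_neg_klFun hJ hAJ hindep
    (c := (μ + Δ) / μ) (x := 1 - t / μ) (by positivity)
    (by rw [hμ, div_mul_cancel₀ _ hμ0.ne', hsum])
    (sub_nonneg.2 ((div_le_one hμ0).2 htμ)) (sub_le_self 1 (by positivity))
  have hφ' : φ (-t / μ) = klFun (1 - t / μ) := by rw [hφ, klFun_apply]; ring_nf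
  rw [hμ, one_sub_mul, div_mul_cancel₀ _ hμ0.ne'] at htail
  exact htail.trans_eq (by rw [hφ']; field_simp)
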